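/- arXiv:2212.14003 — 5 statements merged into one kernel-verified Lean document; each statement's English description precedes it below -/
import Mathlib

section
/- Let D be a nonempty closed convex subset of ℝ^N, let λ, λ* ∈ D, let x ∈ ℝ^D, let a > 0, and suppose ‖F(x)‖ ≤ L_b. Then the dual update λ⁺ := P_D[λ + a F(x)] satisfies ‖λ⁺ − λ*‖² ≤ ‖λ − λ*‖² + a² L_b² + 2a(L(x, λ) − L(x, λ*)). -/
/-!
Projection onto a convex set satisfies the obtuse-angle inequality `⟪z - λ⁺, λ* - λ⁺⟫ ≤ 0` with
`z = λ + a F(x)`, hence `‖λ⁺ - λ*‖ ≤ ‖z - λ*‖`. Expanding the square on the right gives the claim,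
since `L x` is affine in the multiplier with linear part `⟪F(x), ·⟫`.
-/

open scoped RealInnerProductSpace

/-- pointwise form of Lemma 1b: one projected dual-subgradient
ascent step. -/
theorem stmt1 {d n : ℕ}
    (Dset : Set (EuclideanSpace ℝ (Fin n)))
    (hDne : Dset.Nonempty) (hDcl : IsClosed Dset) (hDcv : Convex ℝ Dset)
    (f0 : EuclideanSpace ℝ (Fin d) → ℝ)
    (f : Fin n → EuclideanSpace ℝ (Fin d) → ℝ)
    (hf0 : ConvexOn ℝ Set.univ f0) (hf : ∀ i, ConvexOn ℝ Set.univ (f i))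
    (L : EuclideanSpace ℝ (Fin d) → EuclideanSpace ℝ (Fin n) → ℝ)
    (hL : ∀ y μ, L y μ = f0 y + ∑ i, μ i * f i y)
    (F : EuclideanSpace ℝ (Fin d) → EuclideanSpace ℝ (Fin n))
    (hF : ∀ y i, F y i = f i y)
    (lam lamstar : EuclideanSpace ℝ (Fin n))
    (hlam : lam ∈ Dset) (hlamstar : lamstar ∈ Dset)
    (x : EuclideanSpace ℝ (Fin d))
    (a Lb : ℝ) (ha : 0 < a) (hFb : ‖F x‖ ≤ Lb)
    -- λ⁺ is the Euclidean projection of λ + a F(x) onto D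
    (lamplus : EuclideanSpace ℝ (Fin n))
    (hlamplusD : lamplus ∈ Dset)
    (hproj : ∀ μ ∈ Dset,
      ‖lamplus - (lam + a • F x)‖ ≤ ‖μ - (lam + a • F x)‖) :
    ‖lamplus - lamstar‖ ^ 2 ≤
      ‖lam - lamstar‖ ^ 2 + a ^ 2 * Lb ^ 2
        + 2 * a * (L x lam - L x lamstar) := by
  set z := lam + a • F x with hz
  have hvar : ⟪z - lamplus, lamstar - lamplus⟫ ≤ 0 := by
    refine (norm_eq_iInf_iff_real_inner_le_zero hDcv hlamplusD).1 ?_ lamstar hlamstar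
    have : Nonempty Dset := ⟨⟨lamplus, hlamplusD⟩⟩
    apply le_antisymm
    · refine le_ciInf fun w => ?_
      rw [norm_sub_rev z, norm_sub_rev z]
      exact hproj w w.2
    · exact ciInf_le (f := fun w : Dset => ‖z - w‖)
        ⟨0, by rintro _ ⟨w, rfl⟩; exact norm_nonneg _⟩ ⟨lamplus, hlamplusD⟩
  have hcontract : ‖lamplus - lamstar‖ ^ 2 ≤ ‖z - lamstar‖ ^ 2 := by
    have h := norm_sub_sq_real (z - lamplus) (lamstar - lamplus)
    rw [sub_sub_sub_cancel_right, norm_sub_rev lamstar] at h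
    nlinarith [sq_nonneg ‖z - lamplus‖]
  have hexpand : ‖z - lamstar‖ ^ 2 =
      ‖lam - lamstar‖ ^ 2 + 2 * a * ⟪lam - lamstar, F x⟫ + a ^ 2 * ‖F x‖ ^ 2 := by
    rw [hz, add_sub_right_comm, norm_add_sq_real, real_inner_smul_right, norm_smul,
      mul_pow, Real.norm_eq_abs, sq_abs]
    ring
  have hinner : ⟪lam - lamstar, F x⟫ = L x lam - L x lamstar := by
    rw [hL, hL, add_sub_add_left_eq_sub, ← Finset.sum_sub_distrib, PiLp.inner_apply]
    refine Finset.sum_congr rfl fun i _ => ?_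
    simp [hF]
    ring
  have hbound : a ^ 2 * ‖F x‖ ^ 2 ≤ a ^ 2 * Lb ^ 2 := by gcongr
  rw [hinner] at hexpand
  linarith
end

section
/- Let D be a nonempty closed convex subset of ℝ^N with 0 ∈ D. Let a_0, …, a_{k−1} ≥ 0, let F^0, …, F^{k−1} ∈ ℝ^N with ‖F^j‖ ≤ L_b for all j < k, and let λ^0 ∈ D with λ^{j+1} := P_D[λ^j + a_j F^j] for j < k. Then − Σ_{j=0}^{k−1} a_j ⟨λ^j, F^j⟩ ≤ (1/2)‖λ^0‖² + (1/2) L_b² Σ_{j=0}^{k−1} a_j². -/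
/-!
Since `0 ∈ D`, projecting onto `D` does not increase the norm
(`norm_le_of_isMinOn_convex_of_zero_mem`). Hence
`‖λ^{j+1}‖² ≤ ‖λ^j + a_j F^j‖² = ‖λ^j‖² + 2 a_j ⟪λ^j, F^j⟫ + a_j² ‖F^j‖²`,
and summing over `j < k` telescopes; the term `‖λ^k‖² / 2` left over is nonnegative.
-/

open scoped RealInnerProductSpace

/-- A nearest point `v` to `u` in a convex set containing `0` satisfies `‖v‖ ≤ ‖u‖`: the
variational inequality tested at `0` gives `‖v‖² ≤ ⟪u, v⟫`, and Cauchy–Schwarz concludes. -/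
theorem norm_le_of_isMinOn_convex_of_zero_mem {E : Type*} [NormedAddCommGroup E]
    [InnerProductSpace ℝ E] {K : Set E} (hK : Convex ℝ K) (h0 : (0 : E) ∈ K) {u v : E}
    (hv : v ∈ K) (hmin : ∀ w ∈ K, ‖v - u‖ ≤ ‖w - u‖) : ‖v‖ ≤ ‖u‖ := by
  have : Nonempty K := ⟨⟨v, hv⟩⟩
  have heq : ‖u - v‖ = ⨅ w : K, ‖u - w‖ := by
    apply le_antisymm
    · refine le_ciInf fun w => ?_
      rw [norm_sub_rev u v, norm_sub_rev u w]
      exact hmin w w.2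
    · exact ciInf_le (f := fun w : K => ‖u - w‖)
        ⟨0, by rintro _ ⟨w, rfl⟩; exact norm_nonneg _⟩ ⟨v, hv⟩
  have h := (norm_eq_iInf_iff_real_inner_le_zero hK hv).1 heq 0 h0
  rw [zero_sub, inner_neg_right, inner_sub_left, real_inner_self_eq_norm_sq] at h
  have hcs := real_inner_le_norm u v
  by_contra! hlt
  nlinarith [norm_nonneg u, norm_nonneg v]

/-- telescoped dual bound, equations (79)–(80) of Appendix C. -/
theorem stmt2 {n : ℕ}
    (Dset : Set (EuclideanSpace ℝ (Fin n)))
    (hDcl : IsClosed Dset) (hDcv : Convex ℝ Dset) (hD0 : (0 : EuclideanSpace ℝ (Fin n)) ∈ Dset)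
    (k : ℕ) (a : ℕ → ℝ) (ha : ∀ j, 0 ≤ a j)
    (F : ℕ → EuclideanSpace ℝ (Fin n)) (Lb : ℝ)
    (hFb : ∀ j < k, ‖F j‖ ≤ Lb)
    (lam : ℕ → EuclideanSpace ℝ (Fin n))
    (hlam0 : lam 0 ∈ Dset)
    -- λ^{j+1} is the Euclidean projection of λ^j + a_j F^j onto D
    (hstep : ∀ j < k, lam (j + 1) ∈ Dset ∧
      ∀ μ ∈ Dset, ‖lam (j + 1) - (lam j + a j • F j)‖ ≤ ‖μ - (lam j + a j • F j)‖) :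
    -(∑ j ∈ Finset.range k, a j * ⟪lam j, F j⟫) ≤
      (1 / 2) * ‖lam 0‖ ^ 2 + (1 / 2) * Lb ^ 2 * ∑ j ∈ Finset.range k, (a j) ^ 2 := by
  -- The induction carries the leftover term `‖λ^m‖² / 2`, which makes the step an exact telescope.
  have key : ∀ m ≤ k, (1 / 2) * ‖lam m‖ ^ 2 - (∑ j ∈ Finset.range m, a j * ⟪lam j, F j⟫) ≤
      (1 / 2) * ‖lam 0‖ ^ 2 + (1 / 2) * Lb ^ 2 * ∑ j ∈ Finset.range m, (a j) ^ 2 := by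
    intro m
    induction m with
    | zero => simp
    | succ m ih =>
      intro hm
      have ih := ih (by omega)
      obtain ⟨hmem, hmin⟩ := hstep m (by omega)
      have hle := norm_le_of_isMinOn_convex_of_zero_mem hDcv hD0 hmem hmin
      have hsq : ‖lam (m + 1)‖ ^ 2 ≤ ‖lam m + a m • F m‖ ^ 2 := by gcongr
      rw [norm_add_sq_real, inner_smul_right, norm_smul, mul_pow, Real.norm_eq_abs, sq_abs] at hsq
      have hF : ‖F m‖ ^ 2 ≤ Lb ^ 2 := by
        have := hFb m (by omega)
        gcongr
      have hF' : a m ^ 2 * ‖F m‖ ^ 2 ≤ a m ^ 2 * Lb ^ 2 := by gcongr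
      rw [Finset.sum_range_succ, Finset.sum_range_succ]
      linarith
  have := key k le_rfl
  linarith [sq_nonneg ‖lam k‖]
end

section
/- Under the stochastic DPD-AirComp setup holding for every round j = 0, …, k−1, assume additionally that (x*, λ*) is a saddle point of L over X × D, i.e., L(x*, λ) ≤ L(x*, λ*) ≤ L(x, λ*) for all x ∈ X and λ ∈ D, that λ^j ∈ D a.s., and let Z_k := Σ_{j=0}^{k−1} a_j and Ā_j := E[|A^j|]. Then (1/Z_k) E[Σ_{j=0}^{k−1} a_j L(x^j, λ^j)] − L(x*, λ*) ≤ (1/Z_k) ( R G Σ_{j=0}^{k−1} (N − Ā_j) a_j + (β σ² + L_b²) Σ_{j=0}^{k−1} a_j² + 2 L_b G Σ_{j=0}^{k−1} (N − Ā_j) a_j² + E[‖x^0 − x*‖²] + G² Σ_{j=0}^{k−1} E[(N − |A^j|)²] a_j² ). -/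
/-!
The proof is the usual energy argument for projected subgradient steps, with energy
`‖x j - xstar‖ ^ 2`. Write the exact subgradient of `L (·) (l j)` at `x j` as `v + w`, where `v` is the
part summed over the participating users and `w` the missing part, so that
`‖w‖ ≤ G * (n - |A j|)` and `‖v‖ ≤ Lb + G * (n - |A j|)`. Nonexpansiveness of the projection
(`norm_sub_le_of_minimizes`) and expansion of the square bound the change of energy, which gives
`one_step`; convexity (`lagrangian_sub_le`) and the saddle inequality turn it into a bound on
`a j * (L (x j) (l j) - L xstar lamstar)`. Taking expectations and telescoping finishes the proof.

The subgradient selections `g0`, `g` are not assumed measurable, so independence cannot be used to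
discard the cross term between `v` and the noise. It is absorbed instead by
`‖v + m‖ ^ 2 ≤ 2 * ‖v‖ ^ 2 + 2 * ‖m‖ ^ 2`; the factor `2` is available because expanding the energy
produces `2 * a j` in front of the Lagrangian gap. Only the cross term of the noise with the
measurable `x j - xstar` is eliminated by independence (`integral_inner_eq_zero`).
-/

open scoped RealInnerProductSpace
open MeasureTheory

instance {N : ℕ} : MeasurableSpace (Finset (Fin N)) := ⊤

/-- A nearest point of a convex set to `z` is at least as close to each point of the set as `z`. -/
lemma norm_sub_le_of_minimizes {E : Type*} [NormedAddCommGroup E] [InnerProductSpace ℝ E]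
    {X : Set E} (hX : Convex ℝ X) {p z y : E} (hp : p ∈ X) (hy : y ∈ X)
    (hmin : ∀ q ∈ X, ‖p - z‖ ≤ ‖q - z‖) : ‖p - y‖ ≤ ‖z - y‖ := by
  have hne : Nonempty X := ⟨⟨p, hp⟩⟩
  have hinf : ‖z - p‖ = ⨅ q : X, ‖z - q‖ := by
    apply le_antisymm
    · refine le_ciInf fun q => ?_
      rw [norm_sub_rev z p, norm_sub_rev z q]
      exact hmin q q.2
    · exact ciInf_le (f := fun q : X => ‖z - q‖)
        ⟨0, by rintro _ ⟨q, rfl⟩; exact norm_nonneg _⟩ ⟨p, hp⟩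
  have hvar := (norm_eq_iInf_iff_real_inner_le_zero hX hp).1 hinf y hy
  have hexp : ‖z - y‖ ^ 2 = ‖z - p‖ ^ 2 - 2 * ⟪z - p, y - p⟫ + ‖y - p‖ ^ 2 := by
    rw [← norm_sub_sq_real]
    congr 2
    abel
  rw [norm_sub_rev p y]
  refine le_of_sq_le_sq ?_ (norm_nonneg _)
  nlinarith [sq_nonneg ‖z - p‖]

/-- Energy inequality for one inexact subgradient step from `x` to `p`: `v` is the direction used,
`w` the missing part of the exact subgradient `v + w`, and `m` the noise. -/
lemma one_step {E : Type*} [NormedAddCommGroup E] [InnerProductSpace ℝ E]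
    {p x xs v w m : E} {a Lb c R : ℝ} (ha : 0 < a)
    (hp : ‖p - xs‖ ≤ ‖x - a • (v + m) - xs‖) (hLb : ‖v + w‖ ≤ Lb) (hw : ‖w‖ ≤ c)
    (hR : ‖x - xs‖ ≤ R) :
    a * ⟪v + w, x - xs⟫ ≤ 1 / 2 * (‖x - xs‖ ^ 2 - ‖p - xs‖ ^ 2) + a * (R * c)
      - a * ⟪x - xs, m⟫ + a ^ 2 * (Lb + c) ^ 2 + a ^ 2 * ‖m‖ ^ 2 := by
  have hexp : ‖x - a • (v + m) - xs‖ ^ 2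
      = ‖x - xs‖ ^ 2 - 2 * (a * (⟪v, x - xs⟫ + ⟪x - xs, m⟫)) + a ^ 2 * ‖v + m‖ ^ 2 := by
    have h : x - a • (v + m) - xs = (x - xs) - a • (v + m) := by abel
    rw [h, norm_sub_sq_real, inner_smul_right, inner_add_right, norm_smul, mul_pow,
      Real.norm_eq_abs, sq_abs, real_inner_comm v]
  have hv : ‖v‖ ≤ Lb + c := by
    have h := norm_sub_le (v + w) w
    rw [add_sub_cancel_right] at h
    linarith
  have hv2 : ‖v‖ ^ 2 ≤ (Lb + c) ^ 2 := pow_le_pow_left₀ (norm_nonneg _) hv 2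
  have hpar := parallelogram_law_with_norm ℝ v m
  have hvm : ‖v + m‖ ^ 2 ≤ 2 * (Lb + c) ^ 2 + 2 * ‖m‖ ^ 2 := by
    nlinarith [mul_self_nonneg ‖v - m‖]
  have hwx : ⟪w, x - xs⟫ ≤ R * c := by
    calc ⟪w, x - xs⟫ ≤ ‖w‖ * ‖x - xs‖ := real_inner_le_norm _ _
      _ ≤ c * R := mul_le_mul hw hR (norm_nonneg _) ((norm_nonneg _).trans hw)
      _ = R * c := mul_comm _ _
  have hp2 : ‖p - xs‖ ^ 2 ≤ ‖x - a • (v + m) - xs‖ ^ 2 :=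
    pow_le_pow_left₀ (norm_nonneg _) hp 2
  have h1 := mul_le_mul_of_nonneg_left hvm (sq_nonneg a)
  have h2 := mul_le_mul_of_nonneg_left hwx ha.le
  rw [inner_add_left]
  nlinarith

lemma lagrangian_sub_le {E : Type*} [NormedAddCommGroup E] [InnerProductSpace ℝ E] {n : ℕ}
    {f0 : E → ℝ} {f : Fin n → E → ℝ} {g0 : E → E} {g : Fin n → E → E}
    (hg0 : ∀ x y, f0 x + ⟪g0 x, y - x⟫ ≤ f0 y) (hg : ∀ i x y, f i x + ⟪g i x, y - x⟫ ≤ f i y)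
    {c : Fin n → ℝ} (hc : ∀ i, 0 ≤ c i) (x y : E) :
    (f0 x + ∑ i, c i * f i x) - (f0 y + ∑ i, c i * f i y)
      ≤ ⟪g0 x + ∑ i, c i • g i x, x - y⟫ := by
  have hneg : ∀ u : E, ⟪u, x - y⟫ = -⟪u, y - x⟫ := fun u => by
    rw [← inner_neg_right, neg_sub]
  rw [inner_add_left, sum_inner]
  have h0 := hg0 x y
  have hs : ∑ i, c i * f i x - ∑ i, c i * f i y ≤ ∑ i, ⟪c i • g i x, x - y⟫ := by
    rw [← Finset.sum_sub_distrib]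
    refine Finset.sum_le_sum fun i _ => ?_
    rw [real_inner_smul_left, hneg]
    nlinarith [mul_le_mul_of_nonneg_left (hg i x y) (hc i)]
  rw [hneg]
  linarith

lemma integral_inner_eq_zero {Ω : Type*} [MeasurableSpace Ω] {P : Measure Ω} {d : ℕ}
    {Y W : Ω → EuclideanSpace ℝ (Fin d)} (h : ProbabilityTheory.IndepFun Y W P)
    (hY : Integrable Y P) (hW : Integrable W P) (hW0 : ∫ ω, W ω ∂P = 0) :
    Integrable (fun ω => ⟪Y ω, W ω⟫) P ∧ ∫ ω, ⟪Y ω, W ω⟫ ∂P = 0 := by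
  have h1 := h.integrable_bilin hY hW (innerSL ℝ)
  have h2 := h.integral_bilin hY hW (innerSL ℝ)
  refine ⟨h1, h2.trans ?_⟩
  rw [hW0, map_zero]

/-- Lemma 2 of the paper: expected bound on the weighted running
average of the Lagrangian values under the stochastic DPD-AirComp setup. -/
theorem stmt4 {d n : ℕ}
    {Ω : Type*} [MeasurableSpace Ω] (P : Measure Ω) [IsProbabilityMeasure P]
    -- the sets X and D
    (X : Set (EuclideanSpace ℝ (Fin d)))
    (hXne : X.Nonempty) (hXcp : IsCompact X) (hXcv : Convex ℝ X)
    (Dset : Set (EuclideanSpace ℝ (Fin n)))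
    (hDcl : IsClosed Dset) (hDcv : Convex ℝ Dset)
    (hDpos : ∀ μ ∈ Dset, ∀ i, 0 ≤ μ i)
    -- convex objective and constraint functions, the Lagrangian
    (f0 : EuclideanSpace ℝ (Fin d) → ℝ)
    (f : Fin n → EuclideanSpace ℝ (Fin d) → ℝ)
    (hf0 : ConvexOn ℝ Set.univ f0) (hf : ∀ i, ConvexOn ℝ Set.univ (f i))
    (L : EuclideanSpace ℝ (Fin d) → EuclideanSpace ℝ (Fin n) → ℝ)
    (hL : ∀ y μ, L y μ = f0 y + ∑ i, μ i * f i y)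
    -- fixed subgradients of f_0 and of each f_i
    (g0 : EuclideanSpace ℝ (Fin d) → EuclideanSpace ℝ (Fin d))
    (g : Fin n → EuclideanSpace ℝ (Fin d) → EuclideanSpace ℝ (Fin d))
    (hg0 : ∀ x y, f0 x + ⟪g0 x, y - x⟫ ≤ f0 y)
    (hg : ∀ i x y, f i x + ⟪g i x, y - x⟫ ≤ f i y)
    -- constants and the number of rounds
    (k : ℕ) (hk : 0 < k)
    (a : ℕ → ℝ) (ha : ∀ j, 0 < a j)
    (β σ G Lb R : ℝ) (hβ : 0 < β)
    -- the random processes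
    (x : ℕ → Ω → EuclideanSpace ℝ (Fin d))
    (l : ℕ → Ω → EuclideanSpace ℝ (Fin n))
    (A : ℕ → Ω → Finset (Fin n))
    (nois : ℕ → Ω → EuclideanSpace ℝ (Fin d))
    (hxX : ∀ j ω, x j ω ∈ X) (hlD : ∀ j ω, l j ω ∈ Dset)
    (hmx : ∀ j, Measurable (x j)) (hml : ∀ j, Measurable (l j))
    (hmA : ∀ j, Measurable (A j)) (hmn : ∀ j, Measurable (nois j))
    -- for each round j < k : noise independent of (x^j, λ^j, A^j), zero mean,
    -- variance σ², and the projected primal update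
    (hindep : ∀ j < k,
      ProbabilityTheory.IndepFun (nois j) (fun ω => (x j ω, l j ω, A j ω)) P)
    (hn0 : ∀ j < k, ∫ ω, nois j ω ∂P = 0)
    (hnvar : ∀ j < k, ∫ ω, ‖nois j ω‖ ^ 2 ∂P = σ ^ 2)
    (hnint : ∀ j < k, Integrable (nois j) P)
    (hnsq : ∀ j < k, Integrable (fun ω => ‖nois j ω‖ ^ 2) P)
    (hupd : ∀ j < k, ∀ ω, x (j + 1) ω ∈ X ∧ ∀ y ∈ X,
      ‖x (j + 1) ω - (x j ω - a j • (g0 (x j ω)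
          + (∑ i ∈ A j ω, l j ω i • g i (x j ω)) + Real.sqrt β • nois j ω))‖
        ≤ ‖y - (x j ω - a j • (g0 (x j ω)
          + (∑ i ∈ A j ω, l j ω i • g i (x j ω)) + Real.sqrt β • nois j ω))‖)
    -- a.s. bounds
    (hG : ∀ j < k, ∀ᵐ ω ∂P, ∀ i, ‖l j ω i • g i (x j ω)‖ ≤ G)
    (hLb : ∀ j < k, ∀ᵐ ω ∂P, ‖g0 (x j ω) + ∑ i, l j ω i • g i (x j ω)‖ ≤ Lb)
    -- saddle point (x*, λ*) of L over X × D
    (xstar : EuclideanSpace ℝ (Fin d)) (hxstarX : xstar ∈ X)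
    (lamstar : EuclideanSpace ℝ (Fin n)) (hlamstarD : lamstar ∈ Dset)
    (hsaddle : ∀ y ∈ X, ∀ μ ∈ Dset,
      L xstar μ ≤ L xstar lamstar ∧ L xstar lamstar ≤ L y lamstar)
    (hR : ∀ y ∈ X, ‖y - xstar‖ ≤ R)
    -- abbreviations Z_k and Ā_j
    (Z : ℝ) (hZ : Z = ∑ j ∈ Finset.range k, a j)
    (Abar : ℕ → ℝ) (hAbar : ∀ j, Abar j = ∫ ω, ((A j ω).card : ℝ) ∂P)
    -- integrability of the quantities appearing in the bound
    (hint1 : ∀ j < k, Integrable (fun ω => ‖x j ω - xstar‖ ^ 2) P)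
    (hint2 : ∀ j < k, Integrable (fun ω => L (x j ω) (l j ω)) P)
    (hint3 : ∀ j < k, Integrable (fun ω => L xstar (l j ω)) P)
    (hint4 : ∀ j < k, Integrable (fun ω => ((A j ω).card : ℝ)) P)
    (hint5 : ∀ j < k, Integrable (fun ω => ((n : ℝ) - (A j ω).card) ^ 2) P) :
    (1 / Z) * (∫ ω, (∑ j ∈ Finset.range k, a j * L (x j ω) (l j ω)) ∂P)
        - L xstar lamstar ≤
      (1 / Z) *
        (R * G * ∑ j ∈ Finset.range k, ((n : ℝ) - Abar j) * a j
          + (β * σ ^ 2 + Lb ^ 2) * ∑ j ∈ Finset.range k, (a j) ^ 2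
          + 2 * Lb * G * ∑ j ∈ Finset.range k, ((n : ℝ) - Abar j) * (a j) ^ 2
          + (∫ ω, ‖x 0 ω - xstar‖ ^ 2 ∂P)
          + G ^ 2 * ∑ j ∈ Finset.range k,
              (∫ ω, ((n : ℝ) - (A j ω).card) ^ 2 ∂P) * (a j) ^ 2) := by
  -- `x j - xstar` is bounded, hence square-integrable also for `j = k`, which `hint1` omits
  have hbd : ∀ j, Integrable (fun ω => x j ω - xstar) P := fun j =>
    Integrable.of_bound ((hmx j).sub_const xstar).aestronglyMeasurable R
      (.of_forall fun ω => hR _ (hxX j ω))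
  have hsq : ∀ j, Integrable (fun ω => ‖x j ω - xstar‖ ^ 2) P := fun j =>
    Integrable.of_bound
      (((hmx j).sub_const xstar).norm.pow_const 2).aestronglyMeasurable (R ^ 2)
      (.of_forall fun ω => by
        rw [Real.norm_of_nonneg (sq_nonneg _)]
        exact pow_le_pow_left₀ (norm_nonneg _) (hR _ (hxX j ω)) 2)
  -- the energy inequality of round `j`, almost surely
  have hpt : ∀ j < k, ∀ᵐ ω ∂P, a j * (L (x j ω) (l j ω) - L xstar lamstar)
      ≤ 1 / 2 * (‖x j ω - xstar‖ ^ 2 - ‖x (j + 1) ω - xstar‖ ^ 2)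
        + (R * G * a j + 2 * Lb * G * a j ^ 2) * ((n : ℝ) - (A j ω).card)
        - a j * Real.sqrt β * ⟪x j ω - xstar, nois j ω⟫
        + a j ^ 2 * Lb ^ 2 + a j ^ 2 * G ^ 2 * ((n : ℝ) - (A j ω).card) ^ 2
        + a j ^ 2 * β * ‖nois j ω‖ ^ 2 := by
    intro j hj
    filter_upwards [hG j hj, hLb j hj] with ω hGω hLω
    obtain ⟨hp, hmin⟩ := hupd j hj ω
    have hproj := norm_sub_le_of_minimizes hXcv hp hxstarX hmin
    have hsplit : g0 (x j ω) + ∑ i, l j ω i • g i (x j ω)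
        = (g0 (x j ω) + ∑ i ∈ A j ω, l j ω i • g i (x j ω))
          + ∑ i ∈ (A j ω)ᶜ, l j ω i • g i (x j ω) := by
      rw [add_assoc, Finset.sum_add_sum_compl]
    have hw : ‖∑ i ∈ (A j ω)ᶜ, l j ω i • g i (x j ω)‖ ≤ G * ((n : ℝ) - (A j ω).card) := by
      refine (norm_sum_le_of_le _ fun i _ => hGω i).trans (le_of_eq ?_)
      rw [Finset.sum_const, nsmul_eq_mul, Finset.card_compl, Fintype.card_fin,
        Nat.cast_sub (by simpa using Finset.card_le_univ (A j ω)), mul_comm]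
    rw [hsplit] at hLω
    have hstep := one_step (ha j) hproj hLω hw (hR _ (hxX j ω))
    rw [← hsplit] at hstep
    have hlag := lagrangian_sub_le hg0 hg (hDpos _ (hlD j ω)) (x j ω) xstar
    rw [← hL, ← hL] at hlag
    have hsad := (hsaddle xstar hxstarX _ (hlD j ω)).1
    have hgap := mul_le_mul_of_nonneg_left
      ((sub_le_sub_left hsad (L (x j ω) (l j ω))).trans hlag) (ha j).le
    rw [inner_smul_right, norm_smul, mul_pow, Real.norm_eq_abs, sq_abs,
      Real.sq_sqrt hβ.le] at hstep
    refine hgap.trans (hstep.trans (le_of_eq ?_))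
    ring
  have hexp : ∀ j < k, a j * (∫ ω, L (x j ω) (l j ω) ∂P) - a j * L xstar lamstar
      ≤ 1 / 2 * ((∫ ω, ‖x j ω - xstar‖ ^ 2 ∂P) - ∫ ω, ‖x (j + 1) ω - xstar‖ ^ 2 ∂P)
        + (R * G * a j + 2 * Lb * G * a j ^ 2) * ((n : ℝ) - Abar j)
        + a j ^ 2 * Lb ^ 2 + a j ^ 2 * G ^ 2 * (∫ ω, ((n : ℝ) - (A j ω).card) ^ 2 ∂P)
        + a j ^ 2 * β * σ ^ 2 := by
    intro j hj
    have hind : ProbabilityTheory.IndepFun (fun ω => x j ω - xstar) (nois j) P :=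
      ((hindep j hj).comp measurable_id (measurable_fst.sub_const xstar)).symm
    obtain ⟨hci, hc0⟩ := integral_inner_eq_zero hind (hbd j) (hnint j hj) (hn0 j hj)
    have i1 := ((hsq j).sub (hsq (j + 1))).const_mul (1 / 2)
    have i2 := ((integrable_const (n : ℝ)).sub (hint4 j hj)).const_mul
      (R * G * a j + 2 * Lb * G * a j ^ 2)
    have i3 := hci.const_mul (a j * Real.sqrt β)
    have i4 : Integrable (fun _ : Ω => a j ^ 2 * Lb ^ 2) P := integrable_const _
    have i5 := (hint5 j hj).const_mul (a j ^ 2 * G ^ 2)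
    have i6 := (hnsq j hj).const_mul (a j ^ 2 * β)
    have hmono := integral_mono_ae
      (((hint2 j hj).sub (integrable_const (L xstar lamstar))).const_mul (a j))
      (((((i1.add i2).sub i3).add i4).add i5).add i6) (hpt j hj)
    rw [integral_add' ((((i1.add i2).sub i3).add i4).add i5) i6,
      integral_add' (((i1.add i2).sub i3).add i4) i5,
      integral_add' ((i1.add i2).sub i3) i4,
      integral_sub' (i1.add i2) i3, integral_add' i1 i2] at hmono
    simp only [integral_const_mul, Pi.sub_apply] at hmono
    rw [integral_sub (hint2 j hj) (integrable_const _), integral_sub (hsq j) (hsq (j + 1)),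
      integral_sub (integrable_const _) (hint4 j hj), hc0, hnvar j hj, ← hAbar j] at hmono
    simp only [integral_const, probReal_univ, one_smul] at hmono
    linarith
  have hZpos : 0 < Z := by
    rw [hZ]
    exact Finset.sum_pos (fun j _ => ha j) ⟨0, Finset.mem_range.2 hk⟩
  have hsum := Finset.sum_le_sum fun j hj => hexp j (Finset.mem_range.1 hj)
  rw [Finset.sum_sub_distrib, ← Finset.sum_mul, ← hZ] at hsum
  simp only [Finset.sum_add_distrib] at hsum
  rw [← Finset.mul_sum, Finset.sum_range_sub'] at hsum
  have hswap : ∫ ω, (∑ j ∈ Finset.range k, a j * L (x j ω) (l j ω)) ∂P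
      = ∑ j ∈ Finset.range k, a j * ∫ ω, L (x j ω) (l j ω) ∂P := by
    rw [integral_finsetSum _ fun j hj => (hint2 j (Finset.mem_range.1 hj)).const_mul (a j)]
    simp only [integral_const_mul]
  have hE0 : 0 ≤ ∫ ω, ‖x 0 ω - xstar‖ ^ 2 ∂P := integral_nonneg fun ω => sq_nonneg _
  have hEk : 0 ≤ ∫ ω, ‖x k ω - xstar‖ ^ 2 ∂P := integral_nonneg fun ω => sq_nonneg _
  have e1 : ∑ j ∈ Finset.range k, (R * G * a j + 2 * Lb * G * a j ^ 2) * ((n : ℝ) - Abar j)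
      = R * G * ∑ j ∈ Finset.range k, ((n : ℝ) - Abar j) * a j
        + 2 * Lb * G * ∑ j ∈ Finset.range k, ((n : ℝ) - Abar j) * (a j) ^ 2 := by
    rw [Finset.mul_sum, Finset.mul_sum, ← Finset.sum_add_distrib]
    exact Finset.sum_congr rfl fun j _ => by ring
  have e2 : ∑ j ∈ Finset.range k,
        a j ^ 2 * G ^ 2 * (∫ ω, ((n : ℝ) - (A j ω).card) ^ 2 ∂P)
      = G ^ 2 * ∑ j ∈ Finset.range k,
          (∫ ω, ((n : ℝ) - (A j ω).card) ^ 2 ∂P) * (a j) ^ 2 := by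
    rw [Finset.mul_sum]
    exact Finset.sum_congr rfl fun j _ => by ring
  have e3 : ∑ j ∈ Finset.range k, a j ^ 2 * β * σ ^ 2
      = β * σ ^ 2 * ∑ j ∈ Finset.range k, a j ^ 2 := by
    rw [Finset.mul_sum]
    exact Finset.sum_congr rfl fun j _ => by ring
  rw [e1, e2, e3, ← Finset.sum_mul] at hsum
  have hgap : (1 / Z) * (∑ j ∈ Finset.range k, a j * ∫ ω, L (x j ω) (l j ω) ∂P)
      - L xstar lamstar
      = (1 / Z) * ((∑ j ∈ Finset.range k, a j * ∫ ω, L (x j ω) (l j ω) ∂P)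
        - Z * L xstar lamstar) := by
    field_simp
  rw [hswap, hgap]
  refine mul_le_mul_of_nonneg_left ?_ (by positivity)
  linarith
end

section
/- Under the stochastic DPD-AirComp setup holding for every round j = 0, …, k−1, assume additionally: D is a closed convex subset of [0, ∞)^N with 0 ∈ D; the dual update is λ^{j+1} = P_D[λ^j + a_j F(x^j)] with ‖F(x^j)‖ ≤ L_b a.s.; (x*, λ*) is a saddle point of L over X × D with ⟨λ*, F(x*)⟩ = 0 (so L(x*, λ*) = f_0(x*)); Z_k := Σ_{j=0}^{k−1} a_j, Ā_j := E[|A^j|], and x̂^k := (Σ_{j=0}^{k−1} a_j x^j)/Z_k. Then the expected optimality gap satisfies E[f_0(x̂^k)] − f_0(x*) ≤ (1/Z_k) ( (1/2) E[‖λ^0‖²] + E[‖x^0 − x*‖²] + (β σ² + (3/2) L_b²) Σ_{j=0}^{k−1} a_j² + R G Σ_{j=0}^{k−1} (N − Ā_j) a_j + 2 L_b G Σ_{j=0}^{k−1} (N − Ā_j) a_j² + G² Σ_{j=0}^{k−1} E[(N − |A^j|)²] a_j² ). -/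
/-!
The proof is the energy argument for the primal-dual subgradient method with the potential
`(‖x - x*‖² + ‖λ‖²) / 2`.

Projections onto closed convex sets do not increase the distance to points of the set
(`norm_sub_le_of_isProj`). Applied to the primal update with the point `x*`, together with the
subgradient inequalities, this gives a one-round bound on `L(x, λ) - L(x*, λ)`
(`primal_step`, `lagrangian_le_inner`); the missing users contribute an error vector of norm at
most `(N - |A|) G`, and `‖u + w‖² ≤ 2‖u‖² + 2‖w‖²` separates the gradient from the noise `w`.
Applied to the dual update with the point `0 ∈ D`, it gives a one-round bound on `-⟨λ, F(x)⟩`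
(`dual_step`). Since `L(x*, λ) ≤ L(x*, λ*) = f₀(x*)`, adding the two bounds controls
`f₀(x^j) - f₀(x*)`; the potential telescopes over the rounds and Jensen's inequality passes to the
weighted average. In expectation the only term without a sign, `⟨n^j, x^j - x*⟩`, vanishes by
independence (`integral_inner_eq_zero_of_indepFun`). Only the iterates `x^j`, and not the
subgradient selections, have to be measurable for this: the product of gradient and noise never
appears because the square was split beforehand.
-/

open scoped RealInnerProductSpace
open MeasureTheory

section Helpers

variable {E : Type*} [NormedAddCommGroup E] [InnerProductSpace ℝ E]

/-- A nearest point `p` of a convex set `K` to `z` is at least as close as `z` to every point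
of `K`. -/
lemma norm_sub_le_of_isProj {K : Set E} (hK : Convex ℝ K) {p z : E} (hp : p ∈ K)
    (hmin : ∀ y ∈ K, ‖p - z‖ ≤ ‖y - z‖) {y : E} (hy : y ∈ K) : ‖p - y‖ ^ 2 ≤ ‖z - y‖ ^ 2 := by
  have hinf : ‖z - p‖ = ⨅ w : K, ‖z - w‖ := by
    have : Nonempty K := ⟨⟨p, hp⟩⟩
    apply le_antisymm
    · apply le_ciInf
      intro w
      rw [norm_sub_rev z p, norm_sub_rev z w]
      exact hmin w w.2
    · exact ciInf_le (f := fun w : K => ‖z - w‖)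
        ⟨0, by rintro _ ⟨w, rfl⟩; exact norm_nonneg _⟩ ⟨p, hp⟩
  have h := (norm_eq_iInf_iff_real_inner_le_zero hK hp).1 hinf y hy
  have e : z - y = (z - p) - (y - p) := by abel
  rw [e, norm_sub_sq_real (z - p), norm_sub_rev p y]
  nlinarith [sq_nonneg ‖z - p‖]

/-- One projected primal step along `v - e + w`, where `v` is the full subgradient, `e` the error
from the missing users (of norm at most `m`) and `w` the noise. -/
lemma primal_step {K : Set E} (hK : Convex ℝ K) {p x xs u v e w : E} {α R Lb m : ℝ} (hα : 0 < α)
    (hp : p ∈ K) (hxs : xs ∈ K) (hmin : ∀ y ∈ K, ‖p - (x - α • (u + w))‖ ≤ ‖y - (x - α • (u + w))‖)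
    (hu : v = u + e) (he : ‖e‖ ≤ m) (hv : ‖v‖ ≤ Lb) (hR : ‖x - xs‖ ≤ R) :
    α * ⟪v, x - xs⟫ ≤ 1 / 2 * ‖x - xs‖ ^ 2 - 1 / 2 * ‖p - xs‖ ^ 2 + α * (R * m)
      - α * ⟪w, x - xs⟫ + α ^ 2 * ((Lb + m) ^ 2 + ‖w‖ ^ 2) := by
  have h := norm_sub_le_of_isProj hK hp hmin hxs
  have e1 : x - α • (u + w) - xs = (x - xs) - α • (u + w) := by abel
  rw [e1, norm_sub_sq_real (x - xs), inner_smul_right, norm_smul, mul_pow, Real.norm_eq_abs, sq_abs,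
    real_inner_comm, inner_add_left] at h
  have h2 : ‖u + w‖ ^ 2 ≤ 2 * ((Lb + m) ^ 2 + ‖w‖ ^ 2) := by
    have hu' : ‖u‖ ≤ Lb + m := by
      have : u = v - e := by rw [hu]; abel
      rw [this]
      exact (norm_sub_le _ _).trans (add_le_add hv he)
    have h3 : ‖u‖ ^ 2 ≤ (Lb + m) ^ 2 := pow_le_pow_left₀ (norm_nonneg _) hu' 2
    have h4 : ‖u + w‖ ^ 2 ≤ (‖u‖ + ‖w‖) ^ 2 := pow_le_pow_left₀ (norm_nonneg _) (norm_add_le _ _) 2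
    nlinarith [sq_nonneg (‖u‖ - ‖w‖)]
  have h5 : ⟪e, x - xs⟫ ≤ R * m := by
    calc ⟪e, x - xs⟫ ≤ ‖e‖ * ‖x - xs‖ := real_inner_le_norm _ _
      _ ≤ m * R := mul_le_mul he hR (norm_nonneg _) ((norm_nonneg _).trans he)
      _ = R * m := mul_comm _ _
  have h6 := mul_le_mul_of_nonneg_left h2 (sq_nonneg α)
  have h7 := mul_le_mul_of_nonneg_left h5 hα.le
  rw [hu, inner_add_left]
  linarith

/-- One projected dual step, compared with the point `0` of the dual set. -/
lemma dual_step {K : Set E} (hK : Convex ℝ K) {p l F : E} {α Lb : ℝ}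
    (hp : p ∈ K) (h0 : (0 : E) ∈ K) (hmin : ∀ y ∈ K, ‖p - (l + α • F)‖ ≤ ‖y - (l + α • F)‖)
    (hF : ‖F‖ ≤ Lb) :
    -(α * ⟪l, F⟫) ≤ 1 / 2 * ‖l‖ ^ 2 - 1 / 2 * ‖p‖ ^ 2 + 1 / 2 * α ^ 2 * Lb ^ 2 := by
  have h := norm_sub_le_of_isProj hK hp hmin h0
  rw [sub_zero, sub_zero, norm_add_sq_real, inner_smul_right, norm_smul, mul_pow, Real.norm_eq_abs,
    sq_abs] at h
  have h2 : ‖F‖ ^ 2 ≤ Lb ^ 2 := pow_le_pow_left₀ (norm_nonneg _) hF 2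
  nlinarith [mul_le_mul_of_nonneg_left h2 (sq_nonneg α)]

/-- The subgradient inequality for the Lagrangian, which is convex in `x` because the multipliers
are nonnegative. -/
lemma lagrangian_le_inner {n : ℕ} {f0 : E → ℝ} {f : Fin n → E → ℝ} {g0 : E → E}
    {g : Fin n → E → E} (hg0 : ∀ x y, f0 x + ⟪g0 x, y - x⟫ ≤ f0 y)
    (hg : ∀ i x y, f i x + ⟪g i x, y - x⟫ ≤ f i y) (x xs : E) (l : Fin n → ℝ)
    (hl : ∀ i, 0 ≤ l i) :
    (f0 x + ∑ i, l i * f i x) - (f0 xs + ∑ i, l i * f i xs)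
      ≤ ⟪g0 x + ∑ i, l i • g i x, x - xs⟫ := by
  have key : ∑ i, l i * f i x ≤ ∑ i, l i * f i xs + ∑ i, l i * ⟪g i x, x - xs⟫ := by
    rw [← Finset.sum_add_distrib]
    apply Finset.sum_le_sum
    intro i _
    have h := hg i x xs
    rw [← neg_sub x xs, inner_neg_right] at h
    nlinarith [mul_le_mul_of_nonneg_left h (hl i)]
  have h := hg0 x xs
  rw [← neg_sub x xs, inner_neg_right] at h
  rw [inner_add_left, sum_inner]
  simp only [real_inner_smul_left]
  linarith

end Helpers

lemma integrable_inner_of_bounded {d : ℕ} {Ω : Type*} [MeasurableSpace Ω] {P : Measure Ω}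
    {w y : Ω → EuclideanSpace ℝ (Fin d)} (hw : Integrable w P) (hy : Measurable y)
    {R : ℝ} (hR : ∀ ω, ‖y ω‖ ≤ R) : Integrable (fun ω => ⟪w ω, y ω⟫) P := by
  refine Integrable.mono' (hw.norm.mul_const R)
    (hw.aestronglyMeasurable.inner hy.aestronglyMeasurable) (Filter.Eventually.of_forall ?_)
  intro ω
  exact (norm_inner_le_norm _ _).trans (mul_le_mul_of_nonneg_left (hR ω) (norm_nonneg _))

/-- A centred random vector is orthogonal in expectation to any bounded random vector independent
of it. -/
lemma integral_inner_eq_zero_of_indepFun {d : ℕ} {Ω : Type*} [MeasurableSpace Ω] {P : Measure Ω}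
    [IsProbabilityMeasure P] {w y : Ω → EuclideanSpace ℝ (Fin d)} (hw : Integrable w P)
    (hy : Measurable y) {R : ℝ} (hR : ∀ ω, ‖y ω‖ ≤ R) (hw0 : ∫ ω, w ω ∂P = 0)
    (hind : ProbabilityTheory.IndepFun w y P) : ∫ ω, ⟪w ω, y ω⟫ ∂P = 0 := by
  have hyi : Integrable y P :=
    Integrable.of_bound hy.aestronglyMeasurable R (Filter.Eventually.of_forall hR)
  have hcoord : ∀ i, Measurable fun v : EuclideanSpace ℝ (Fin d) => v i := fun i => by fun_prop
  have hwi : ∀ i, Integrable (fun ω => w ω i) P := fun i =>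
    (EuclideanSpace.proj (𝕜 := ℝ) i).integrable_comp hw
  have hyi' : ∀ i, Integrable (fun ω => y ω i) P := fun i =>
    (EuclideanSpace.proj (𝕜 := ℝ) i).integrable_comp hyi
  have hind' : ∀ i, ProbabilityTheory.IndepFun (fun ω => w ω i) (fun ω => y ω i) P := fun i =>
    hind.comp (hcoord i) (hcoord i)
  have hz : ∀ i, ∫ ω, w ω i ∂P = 0 := by
    intro i
    have h := (EuclideanSpace.proj (𝕜 := ℝ) i).integral_comp_comm hw
    rw [hw0, map_zero] at h
    exact h
  have he : ∀ ω, ⟪w ω, y ω⟫ = ∑ i, w ω i * y ω i := by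
    intro ω
    rw [PiLp.inner_apply]
    simp [mul_comm]
  simp_rw [he]
  have hprod : ∀ i, Integrable (fun ω => w ω i * y ω i) P := fun i =>
    (hind' i).integrable_mul (hwi i) (hyi' i)
  rw [integral_finsetSum _ fun i _ => hprod i]
  apply Finset.sum_eq_zero
  intro i _
  rw [(hind' i).integral_fun_mul_eq_mul_integral (hwi i).aestronglyMeasurable
    (hyi' i).aestronglyMeasurable, hz i, zero_mul]

/-- `φ` is integrable with integral `c`: integrability and value are tracked together, so that
linear combinations can be integrated in one pass. -/
def HasFiniteIntegralValue {Ω : Type*} [MeasurableSpace Ω] (P : Measure Ω) (φ : Ω → ℝ) (c : ℝ) :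
    Prop :=
  Integrable φ P ∧ ∫ ω, φ ω ∂P = c

namespace HasFiniteIntegralValue

variable {Ω : Type*} [MeasurableSpace Ω] {P : Measure Ω} {φ ψ : Ω → ℝ} {b c : ℝ}

lemma const (P : Measure Ω) [IsProbabilityMeasure P] (c : ℝ) :
    HasFiniteIntegralValue P (fun _ => c) c :=
  ⟨integrable_const c, by simp⟩

lemma add (h : HasFiniteIntegralValue P φ b) (h' : HasFiniteIntegralValue P ψ c) :
    HasFiniteIntegralValue P (fun ω => φ ω + ψ ω) (b + c) :=
  ⟨h.1.add h'.1, by rw [integral_add h.1 h'.1, h.2, h'.2]⟩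

lemma sub (h : HasFiniteIntegralValue P φ b) (h' : HasFiniteIntegralValue P ψ c) :
    HasFiniteIntegralValue P (fun ω => φ ω - ψ ω) (b - c) :=
  ⟨h.1.sub h'.1, by rw [integral_sub h.1 h'.1, h.2, h'.2]⟩

lemma const_mul (r : ℝ) (h : HasFiniteIntegralValue P φ c) :
    HasFiniteIntegralValue P (fun ω => r * φ ω) (r * c) :=
  ⟨h.1.const_mul r, by rw [integral_const_mul, h.2]⟩

lemma sum {s : Finset ℕ} {φ : ℕ → Ω → ℝ} {c : ℕ → ℝ}
    (h : ∀ j ∈ s, HasFiniteIntegralValue P (φ j) (c j)) :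
    HasFiniteIntegralValue P (fun ω => ∑ j ∈ s, φ j ω) (∑ j ∈ s, c j) :=
  ⟨integrable_finsetSum _ fun j hj => (h j hj).1, by
    rw [integral_finsetSum _ fun j hj => (h j hj).1]
    exact Finset.sum_congr rfl fun j hj => (h j hj).2⟩

end HasFiniteIntegralValue

/-- Theorem 2 of the paper: expected upper bound on the
optimality gap of the running weighted average under the stochastic
DPD-AirComp setup. -/
theorem stmt5 {d n : ℕ}
    {Ω : Type*} [MeasurableSpace Ω] (P : Measure Ω) [IsProbabilityMeasure P]
    -- the sets X and D
    (X : Set (EuclideanSpace ℝ (Fin d)))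
    (hXne : X.Nonempty) (hXcp : IsCompact X) (hXcv : Convex ℝ X)
    (Dset : Set (EuclideanSpace ℝ (Fin n)))
    (hDcl : IsClosed Dset) (hDcv : Convex ℝ Dset)
    (hDpos : ∀ μ ∈ Dset, ∀ i, 0 ≤ μ i)
    (hD0 : (0 : EuclideanSpace ℝ (Fin n)) ∈ Dset)
    -- convex objective and constraint functions, the Lagrangian and F
    (f0 : EuclideanSpace ℝ (Fin d) → ℝ)
    (f : Fin n → EuclideanSpace ℝ (Fin d) → ℝ)
    (hf0 : ConvexOn ℝ Set.univ f0) (hf : ∀ i, ConvexOn ℝ Set.univ (f i))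
    (L : EuclideanSpace ℝ (Fin d) → EuclideanSpace ℝ (Fin n) → ℝ)
    (hL : ∀ y μ, L y μ = f0 y + ∑ i, μ i * f i y)
    (F : EuclideanSpace ℝ (Fin d) → EuclideanSpace ℝ (Fin n))
    (hF : ∀ y i, F y i = f i y)
    -- fixed subgradients of f_0 and of each f_i
    (g0 : EuclideanSpace ℝ (Fin d) → EuclideanSpace ℝ (Fin d))
    (g : Fin n → EuclideanSpace ℝ (Fin d) → EuclideanSpace ℝ (Fin d))
    (hg0 : ∀ x y, f0 x + ⟪g0 x, y - x⟫ ≤ f0 y)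
    (hg : ∀ i x y, f i x + ⟪g i x, y - x⟫ ≤ f i y)
    -- constants and the number of rounds
    (k : ℕ) (hk : 0 < k)
    (a : ℕ → ℝ) (ha : ∀ j, 0 < a j)
    (β σ G Lb R : ℝ) (hβ : 0 < β)
    -- the random processes
    (x : ℕ → Ω → EuclideanSpace ℝ (Fin d))
    (l : ℕ → Ω → EuclideanSpace ℝ (Fin n))
    (A : ℕ → Ω → Finset (Fin n))
    (nois : ℕ → Ω → EuclideanSpace ℝ (Fin d))
    (hxX : ∀ j ω, x j ω ∈ X) (hlD : ∀ j ω, l j ω ∈ Dset)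
    (hmx : ∀ j, Measurable (x j)) (hml : ∀ j, Measurable (l j))
    (hmA : ∀ j, Measurable (A j)) (hmn : ∀ j, Measurable (nois j))
    -- for each round j < k : noise independent of (x^j, λ^j, A^j), zero mean,
    -- variance σ², and the projected primal update
    (hindep : ∀ j < k,
      ProbabilityTheory.IndepFun (nois j) (fun ω => (x j ω, l j ω, A j ω)) P)
    (hn0 : ∀ j < k, ∫ ω, nois j ω ∂P = 0)
    (hnvar : ∀ j < k, ∫ ω, ‖nois j ω‖ ^ 2 ∂P = σ ^ 2)
    (hnint : ∀ j < k, Integrable (nois j) P)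
    (hnsq : ∀ j < k, Integrable (fun ω => ‖nois j ω‖ ^ 2) P)
    (hupd : ∀ j < k, ∀ ω, x (j + 1) ω ∈ X ∧ ∀ y ∈ X,
      ‖x (j + 1) ω - (x j ω - a j • (g0 (x j ω)
          + (∑ i ∈ A j ω, l j ω i • g i (x j ω)) + Real.sqrt β • nois j ω))‖
        ≤ ‖y - (x j ω - a j • (g0 (x j ω)
          + (∑ i ∈ A j ω, l j ω i • g i (x j ω)) + Real.sqrt β • nois j ω))‖)
    -- the projected dual update λ^{j+1} = P_D[λ^j + a_j F(x^j)]
    (hdual : ∀ j < k, ∀ ω, l (j + 1) ω ∈ Dset ∧ ∀ μ ∈ Dset,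
      ‖l (j + 1) ω - (l j ω + a j • F (x j ω))‖ ≤ ‖μ - (l j ω + a j • F (x j ω))‖)
    -- a.s. bounds
    (hG : ∀ j < k, ∀ᵐ ω ∂P, ∀ i, ‖l j ω i • g i (x j ω)‖ ≤ G)
    (hLb : ∀ j < k, ∀ᵐ ω ∂P, ‖g0 (x j ω) + ∑ i, l j ω i • g i (x j ω)‖ ≤ Lb)
    (hFb : ∀ j < k, ∀ᵐ ω ∂P, ‖F (x j ω)‖ ≤ Lb)
    -- saddle point (x*, λ*) of L over X × D with ⟨λ*, F(x*)⟩ = 0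
    (xstar : EuclideanSpace ℝ (Fin d)) (hxstarX : xstar ∈ X)
    (lamstar : EuclideanSpace ℝ (Fin n)) (hlamstarD : lamstar ∈ Dset)
    (hsaddle : ∀ y ∈ X, ∀ μ ∈ Dset,
      L xstar μ ≤ L xstar lamstar ∧ L xstar lamstar ≤ L y lamstar)
    (hcomp : ⟪lamstar, F xstar⟫ = 0)
    (hR : ∀ y ∈ X, ‖y - xstar‖ ≤ R)
    -- abbreviations Z_k, Ā_j and the running weighted average x̂^k
    (Z : ℝ) (hZ : Z = ∑ j ∈ Finset.range k, a j)
    (Abar : ℕ → ℝ) (hAbar : ∀ j, Abar j = ∫ ω, ((A j ω).card : ℝ) ∂P)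
    (xhat : Ω → EuclideanSpace ℝ (Fin d))
    (hxhat : ∀ ω, xhat ω = Z⁻¹ • ∑ j ∈ Finset.range k, a j • x j ω)
    -- integrability of the quantities appearing in the bound
    (hint0 : Integrable (fun ω => f0 (xhat ω)) P)
    (hintlam : Integrable (fun ω => ‖l 0 ω‖ ^ 2) P)
    (hint1 : ∀ j < k, Integrable (fun ω => ‖x j ω - xstar‖ ^ 2) P)
    (hint2 : ∀ j < k, Integrable (fun ω => L (x j ω) (l j ω)) P)
    (hint3 : ∀ j < k, Integrable (fun ω => L xstar (l j ω)) P)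
    (hint4 : ∀ j < k, Integrable (fun ω => ((A j ω).card : ℝ)) P)
    (hint5 : ∀ j < k, Integrable (fun ω => ((n : ℝ) - (A j ω).card) ^ 2) P) :
    (∫ ω, f0 (xhat ω) ∂P) - f0 xstar ≤
      (1 / Z) *
        ((1 / 2) * (∫ ω, ‖l 0 ω‖ ^ 2 ∂P)
          + (∫ ω, ‖x 0 ω - xstar‖ ^ 2 ∂P)
          + (β * σ ^ 2 + (3 / 2) * Lb ^ 2) * ∑ j ∈ Finset.range k, (a j) ^ 2
          + R * G * ∑ j ∈ Finset.range k, ((n : ℝ) - Abar j) * a j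
          + 2 * Lb * G * ∑ j ∈ Finset.range k, ((n : ℝ) - Abar j) * (a j) ^ 2
          + G ^ 2 * ∑ j ∈ Finset.range k,
              (∫ ω, ((n : ℝ) - (A j ω).card) ^ 2 ∂P) * (a j) ^ 2) := by
  have hZpos : 0 < Z := by
    rw [hZ]
    exact Finset.sum_pos (fun j _ => ha j) ⟨0, Finset.mem_range.2 hk⟩
  have hinner : ∀ (μ : EuclideanSpace ℝ (Fin n)) y, ⟪μ, F y⟫ = ∑ i, μ i * f i y := by
    intro μ y
    rw [PiLp.inner_apply]
    simp [hF, mul_comm]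
  have hLstar : L xstar lamstar = f0 xstar := by
    rw [hL, ← hinner, hcomp, add_zero]
  -- the almost sure one-round bound, with the potential difference on the right
  have hround : ∀ j < k, ∀ᵐ ω ∂P, a j * (f0 (x j ω) - f0 xstar)
      ≤ (1 / 2 * ‖x j ω - xstar‖ ^ 2 + 1 / 2 * ‖l j ω‖ ^ 2)
        - (1 / 2 * ‖x (j + 1) ω - xstar‖ ^ 2 + 1 / 2 * ‖l (j + 1) ω‖ ^ 2)
        + (a j * (R * G) * (n - (A j ω).card) - a j * √β * ⟪nois j ω, x j ω - xstar⟫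
          + 3 / 2 * Lb ^ 2 * a j ^ 2 + 2 * Lb * G * a j ^ 2 * (n - (A j ω).card)
          + G ^ 2 * a j ^ 2 * ((n : ℝ) - (A j ω).card) ^ 2 + a j ^ 2 * β * ‖nois j ω‖ ^ 2) := by
    intro j hj
    filter_upwards [hG j hj, hLb j hj, hFb j hj] with ω hGω hLω hFω
    obtain ⟨hp, hpmin⟩ := hupd j hj ω
    obtain ⟨hq, hqmin⟩ := hdual j hj ω
    have hsplit : g0 (x j ω) + ∑ i, l j ω i • g i (x j ω)
        = (g0 (x j ω) + ∑ i ∈ A j ω, l j ω i • g i (x j ω))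
          + ∑ i ∈ (A j ω)ᶜ, l j ω i • g i (x j ω) := by
      rw [add_assoc, Finset.sum_add_sum_compl]
    have herr : ‖∑ i ∈ (A j ω)ᶜ, l j ω i • g i (x j ω)‖ ≤ (n - (A j ω).card) * G := by
      have h := norm_sum_le_of_le (A j ω)ᶜ (fun i _ => hGω i)
      have hc : (((A j ω)ᶜ.card : ℕ) : ℝ) = n - (A j ω).card := by
        rw [Finset.card_compl, Fintype.card_fin, Nat.cast_sub]
        simpa using Finset.card_le_univ (A j ω)
      rwa [Finset.sum_const, nsmul_eq_mul, hc] at h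
    have h1 := primal_step hXcv (ha j) hp hxstarX hpmin hsplit herr hLω (hR _ (hxX j ω))
    have h2 := dual_step hDcv hq hD0 hqmin hFω
    have h3 := mul_le_mul_of_nonneg_left
      (lagrangian_le_inner hg0 hg (x j ω) xstar (l j ω) (hDpos _ (hlD j ω))) (ha j).le
    have h4 := (hsaddle xstar hxstarX _ (hlD j ω)).1
    rw [hLstar, hL] at h4
    have h5 := mul_le_mul_of_nonneg_left h4 (ha j).le
    rw [hinner] at h2
    rw [real_inner_smul_left, norm_smul, mul_pow, Real.norm_eq_abs, sq_abs, Real.sq_sqrt hβ.le] at h1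
    linarith
  have hall : ∀ᵐ ω ∂P, ∀ j < k, a j * (f0 (x j ω) - f0 xstar)
      ≤ (1 / 2 * ‖x j ω - xstar‖ ^ 2 + 1 / 2 * ‖l j ω‖ ^ 2)
        - (1 / 2 * ‖x (j + 1) ω - xstar‖ ^ 2 + 1 / 2 * ‖l (j + 1) ω‖ ^ 2)
        + (a j * (R * G) * (n - (A j ω).card) - a j * √β * ⟪nois j ω, x j ω - xstar⟫
          + 3 / 2 * Lb ^ 2 * a j ^ 2 + 2 * Lb * G * a j ^ 2 * (n - (A j ω).card)
          + G ^ 2 * a j ^ 2 * ((n : ℝ) - (A j ω).card) ^ 2 + a j ^ 2 * β * ‖nois j ω‖ ^ 2) :=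
    ae_all_iff.2 fun j => by
      by_cases hj : j < k
      · filter_upwards [hround j hj] with ω h _ using h
      · exact Filter.Eventually.of_forall fun ω h => absurd h hj
  have hjensen : ∀ ω, Z * (f0 (xhat ω) - f0 xstar)
      ≤ ∑ j ∈ Finset.range k, a j * (f0 (x j ω) - f0 xstar) := by
    intro ω
    have h := hf0.map_sum_le (t := Finset.range k) (w := fun j => Z⁻¹ * a j) (p := fun j => x j ω)
      (fun j _ => mul_nonneg (inv_nonneg.2 hZpos.le) (ha j).le)
      (by rw [← Finset.mul_sum, ← hZ, inv_mul_cancel₀ hZpos.ne']) (fun j _ => Set.mem_univ _)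
    have hx : ∑ j ∈ Finset.range k, (Z⁻¹ * a j) • x j ω = xhat ω := by
      rw [hxhat, Finset.smul_sum]
      simp only [mul_smul]
    simp only [hx, smul_eq_mul, mul_assoc] at h
    rw [← Finset.mul_sum] at h
    have h2 := mul_le_mul_of_nonneg_left h hZpos.le
    rw [mul_inv_cancel_left₀ hZpos.ne'] at h2
    simp only [mul_sub, Finset.sum_sub_distrib]
    rw [← Finset.sum_mul, ← hZ]
    linarith
  have hae : ∀ᵐ ω ∂P, Z * (f0 (xhat ω) - f0 xstar)
      ≤ 1 / 2 * ‖l 0 ω‖ ^ 2 + ‖x 0 ω - xstar‖ ^ 2 + ∑ j ∈ Finset.range k,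
        (a j * (R * G) * (n - (A j ω).card) - a j * √β * ⟪nois j ω, x j ω - xstar⟫
          + 3 / 2 * Lb ^ 2 * a j ^ 2 + 2 * Lb * G * a j ^ 2 * (n - (A j ω).card)
          + G ^ 2 * a j ^ 2 * ((n : ℝ) - (A j ω).card) ^ 2 + a j ^ 2 * β * ‖nois j ω‖ ^ 2) := by
    filter_upwards [hall] with ω hω
    have h := (hjensen ω).trans (Finset.sum_le_sum fun j hj => hω j (Finset.mem_range.1 hj))
    rw [Finset.sum_add_distrib, Finset.sum_range_sub'
      (fun j => 1 / 2 * ‖x j ω - xstar‖ ^ 2 + 1 / 2 * ‖l j ω‖ ^ 2)] at h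
    nlinarith [sq_nonneg ‖x k ω - xstar‖, sq_nonneg ‖l k ω‖, sq_nonneg ‖x 0 ω - xstar‖]
  have hbd : ∀ j ω, ‖x j ω - xstar‖ ≤ R := fun j ω => hR _ (hxX j ω)
  have hmd : ∀ j, Measurable fun ω => x j ω - xstar := fun j => (hmx j).sub_const _
  have hcross : ∀ j < k, ∫ ω, ⟪nois j ω, x j ω - xstar⟫ ∂P = 0 := fun j hj =>
    integral_inner_eq_zero_of_indepFun (hnint j hj) (hmd j) (hbd j) (hn0 j hj)
      ((hindep j hj).comp measurable_id (measurable_fst.sub_const xstar))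
  -- the expectation of the error of each round
  have hterm : ∀ j < k, HasFiniteIntegralValue P (fun ω =>
        a j * (R * G) * ((n : ℝ) - (A j ω).card) - a j * √β * ⟪nois j ω, x j ω - xstar⟫
          + 3 / 2 * Lb ^ 2 * a j ^ 2 + 2 * Lb * G * a j ^ 2 * (n - (A j ω).card)
          + G ^ 2 * a j ^ 2 * ((n : ℝ) - (A j ω).card) ^ 2 + a j ^ 2 * β * ‖nois j ω‖ ^ 2)
      (a j * (R * G) * (n - Abar j) - a j * √β * 0
          + 3 / 2 * Lb ^ 2 * a j ^ 2 + 2 * Lb * G * a j ^ 2 * (n - Abar j)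
          + G ^ 2 * a j ^ 2 * (∫ ω, ((n : ℝ) - (A j ω).card) ^ 2 ∂P)
          + a j ^ 2 * β * σ ^ 2) := by
    intro j hj
    have hc := (HasFiniteIntegralValue.const P (n : ℝ)).sub ⟨hint4 j hj, (hAbar j).symm⟩
    have hi : HasFiniteIntegralValue P (fun ω => ⟪nois j ω, x j ω - xstar⟫) 0 :=
      ⟨integrable_inner_of_bounded (hnint j hj) (hmd j) (hbd j), hcross j hj⟩
    exact (((((hc.const_mul _).sub (hi.const_mul _)).add (.const P _)).add (hc.const_mul _)).add
      (.const_mul _ ⟨hint5 j hj, rfl⟩)).add (.const_mul _ ⟨hnsq j hj, hnvar j hj⟩)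
  have hrhs := ((HasFiniteIntegralValue.const_mul (1 / 2) ⟨hintlam, rfl⟩).add
    ⟨hint1 0 hk, rfl⟩).add (HasFiniteIntegralValue.sum fun j hj =>
      hterm j (Finset.mem_range.1 hj))
  have hlhs := HasFiniteIntegralValue.const_mul Z
    (HasFiniteIntegralValue.sub ⟨hint0, rfl⟩ (.const P (f0 xstar)))
  have hfin := integral_mono_ae hlhs.1 hrhs.1 hae
  rw [hlhs.2, hrhs.2] at hfin
  rw [one_div, ← div_eq_inv_mul, le_div_iff₀ hZpos, mul_comm]
  refine hfin.trans (le_of_eq ?_)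
  simp only [Finset.mul_sum, add_assoc, ← Finset.sum_add_distrib]
  congr 2
  apply Finset.sum_congr rfl
  intro j _
  ring
end

section
/- Let ζ > 0, let (δ_k) be a bounded sequence of nonnegative reals, let (Z_k) be a sequence of positive reals with Z_k → ∞, and define r_k := (ζ + √(2ζ² + δ_k Z_k))/2. If (v_k) is a sequence of nonnegative reals satisfying v_k ≤ (1/r_k) ( δ_k + (2/Z_k)(ζ + r_k)² ) for all k, then lim_{k→∞} v_k = 0. -/
open Filter

/-!
Put `s = √(2ζ² + δZ)`, so that `δ Z = s² - 2ζ²`, `ζ ≤ s` and `s / 2 ≤ r ≤ s`. The bound on `v`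
is then at most `(2 / s) (s² / Z + 8 s² / Z) = 18 s / Z`, and `s / Z = √(2ζ² / Z² + δ / Z)`
tends to zero because `δ` is bounded and `Z → ∞`.
-/

/-- analytic content of Corollary 1: with the optimal per-round
choice r*_k, the constraint-violation bound tends to zero. -/
theorem stmt12 (ζ : ℝ) (hζ : 0 < ζ)
    (δ : ℕ → ℝ) (hδ0 : ∀ k, 0 ≤ δ k) (hδbdd : ∃ M : ℝ, ∀ k, δ k ≤ M)
    (Z : ℕ → ℝ) (hZpos : ∀ k, 0 < Z k) (hZ : Tendsto Z atTop atTop)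
    (r : ℕ → ℝ)
    (hr : ∀ k, r k = (ζ + Real.sqrt (2 * ζ ^ 2 + δ k * Z k)) / 2)
    (v : ℕ → ℝ) (hv0 : ∀ k, 0 ≤ v k)
    (hv : ∀ k, v k ≤ (1 / r k) * (δ k + (2 / Z k) * (ζ + r k) ^ 2)) :
    Tendsto v atTop (nhds 0) := by
  obtain ⟨M, hM⟩ := hδbdd
  have hZinv : Tendsto (fun k => (Z k)⁻¹) atTop (nhds 0) := tendsto_inv_atTop_zero.comp hZ
  have hlim : Tendsto (fun k => 18 * Real.sqrt (2 * ζ ^ 2 * (Z k)⁻¹ ^ 2 + M * (Z k)⁻¹))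
      atTop (nhds 0) := by
    have h := ((((hZinv.pow 2).const_mul (2 * ζ ^ 2)).add (hZinv.const_mul M)).sqrt).const_mul 18
    simpa using h
  refine squeeze_zero hv0 (fun k => (hv k).trans ?_) hlim
  have hz := hZpos k
  have hδZ : 0 ≤ δ k * Z k := mul_nonneg (hδ0 k) hz.le
  obtain ⟨s, hs⟩ : ∃ s, s = Real.sqrt (2 * ζ ^ 2 + δ k * Z k) := ⟨_, rfl⟩
  have hs2 : s ^ 2 = 2 * ζ ^ 2 + δ k * Z k := by
    rw [hs, Real.sq_sqrt (by positivity)]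
  have hζs : ζ ≤ s := by
    rw [hs]
    exact Real.le_sqrt_of_sq_le (by nlinarith [sq_nonneg ζ])
  have hs0 : 0 < s := hζ.trans_le hζs
  have hrk : r k = (ζ + s) / 2 := by rw [hr, hs]
  have hr0 : 0 < r k := by rw [hrk]; positivity
  have hsZ : s / Z k ≤ Real.sqrt (2 * ζ ^ 2 * (Z k)⁻¹ ^ 2 + M * (Z k)⁻¹) := by
    apply Real.le_sqrt_of_sq_le
    have hdiv : (s / Z k) ^ 2 = 2 * ζ ^ 2 * (Z k)⁻¹ ^ 2 + δ k * (Z k)⁻¹ := by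
      rw [div_pow, hs2]
      field_simp
    rw [hdiv]
    gcongr
    exact hM k
  refine le_trans ?_ (mul_le_mul_of_nonneg_left hsZ (by norm_num))
  -- Clearing denominators leaves a polynomial inequality in `ζ ≤ s`, since `δ Z = s² - 2ζ²`.
  have hkey : δ k * Z k + 2 * (ζ + r k) ^ 2 ≤ 18 * s * r k := by
    rw [hrk]
    nlinarith [mul_nonneg hζ.le (sub_nonneg.2 hζs), mul_nonneg hs0.le (sub_nonneg.2 hζs)]
  have hrew : 1 / r k * (δ k + 2 / Z k * (ζ + r k) ^ 2)
      = (δ k * Z k + 2 * (ζ + r k) ^ 2) / (r k * Z k) := by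
    field_simp
  have hrew' : 18 * (s / Z k) = 18 * s * r k / (r k * Z k) := by
    field_simp
  rw [hrew, hrew']
  gcongr
end
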